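/- Let H be a real Hilbert space, let A : H → Set H be maximal monotone, and let B : H → H be β-cocoercive for some β > 0. Suppose Ω := {z ∈ H | ∃ u ∈ A(z), u + B(z) = 0} is nonempty. Let γ_k ∈ (0, 2β), α_k := 2β/(4β − γ_k), and λ_k ∈ (0, 1/α_k) for each k, and suppose there exist λ̲ > 0, τ > 0, γ̲ > 0, and ε ∈ (0, 2β − γ̲) such that λ̲ ≤ λ_k ≤ 1/α_k − τ and γ̲ ≤ γ_k ≤ 2β − ε for all k. Let a_k, b_k ∈ H with ∑_k λ_k‖a_k‖ < ∞ and ∑_k λ_k‖b_k‖ < ∞. For each k let J_k : H → H satisfy the resolvent property (1/γ_k)·(y − J_k y) ∈ A(J_k y) for every y ∈ H, and from x_0 ∈ H define x_{k+1} = x_k + λ_k·(J_k(x_k − γ_k·(B x_k + b_k)) + a_k − x_k). Then there exists p ∈ Ω such that x_k converges weakly to p, i.e., ⟨x_k, y⟩ → ⟨p, y⟩ for every y ∈ H. -/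

import Mathlib

open RealInnerProductSpace Filter

/-!
Write `T k y = J k (y - γ k • B y)` for the exact forward-backward map. For a zero `z` of `A + B`,
monotonicity of `A` and cocoercivity of `B` give `(4β - γ k) / (2β) * ‖y - T k y‖² ≤
2 ⟪y - z, y - T k y⟫`, so a step relaxed by `λ k` decreases `‖· - z‖²` by at least
`λ k * ((4β - γ k) / (2β) - λ k) * ‖y - T k y‖²`. Since the errors are summable, `‖x k - z‖`
converges and the residual `x k - T k (x k)` tends to `0`. The residual being small, `B (x k)`
converges strongly to `B z`, hence the weak-strong closedness of the graph of `A` shows that weak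
cluster points of `x` are zeros of `A + B`, and Opial's lemma concludes.
-/

open scoped Topology Asymptotics

section RealSequences

variable {s t d e : ℕ → ℝ}

lemma exists_tendsto_of_succ_le_add_summable (hs : BddBelow (Set.range s)) (he : Summable e)
    (h : ∀ k, s (k + 1) ≤ s k + e k) : ∃ l, Tendsto s atTop (𝓝 l) := by
  have partialSums := he.hasSum.tendsto_sum_nat
  have anti : Antitone fun k => s k - ∑ i ∈ Finset.range k, e i :=
    antitone_nat_of_succ_le fun k => by
      rw [Finset.sum_range_succ]
      linarith [h k]
  have bdd : BddBelow (Set.range fun k => s k - ∑ i ∈ Finset.range k, e i) := by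
    obtain ⟨m, hm⟩ := hs
    obtain ⟨M, hM⟩ := partialSums.bddAbove_range
    refine ⟨m - M, ?_⟩
    rintro _ ⟨k, rfl⟩
    exact sub_le_sub (hm ⟨k, rfl⟩) (hM ⟨k, rfl⟩)
  exact ⟨_, by simpa using (tendsto_atTop_ciInf anti bdd).add partialSums⟩

lemma exists_tendsto_and_decrement_tendsto_zero (hs : ∀ k, 0 ≤ s k) (hd : ∀ k, 0 ≤ d k)
    (he : Summable e) (hst : ∀ k, s (k + 1) ≤ t k + e k) (htd : ∀ k, t k ^ 2 + d k ≤ s k ^ 2) :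
    (∃ l, Tendsto s atTop (𝓝 l)) ∧ Tendsto d atTop (𝓝 0) := by
  have hts : ∀ k, t k ≤ s k := fun k =>
    le_of_sq_le_sq (by linarith [htd k, hd k]) (hs k)
  obtain ⟨l, hl⟩ : ∃ l, Tendsto s atTop (𝓝 l) :=
    exists_tendsto_of_succ_le_add_summable ⟨0, Set.forall_mem_range.2 hs⟩ he fun k =>
      (hst k).trans (by gcongr; exact hts k)
  have ht : Tendsto t atTop (𝓝 l) := by
    have lower : Tendsto (fun k => s (k + 1) - e k) atTop (𝓝 l) := by
      simpa using (hl.comp (tendsto_add_atTop_nat 1)).sub he.tendsto_atTop_zero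
    exact tendsto_of_tendsto_of_tendsto_of_le_of_le lower hl
      (fun k => sub_le_iff_le_add.2 (hst k)) hts
  refine ⟨⟨l, hl⟩, squeeze_zero hd (fun k => le_sub_iff_add_le'.2 (htd k)) ?_⟩
  simpa using (hl.pow 2).sub (ht.pow 2)

end RealSequences

section NormedGroups

variable {E : Type*} [SeminormedAddCommGroup E]

lemma summable_mul_norm_add_mul_norm {γ lam : ℕ → ℝ} {a b : ℕ → E} {C : ℝ}
    (hγ : ∀ k, 0 ≤ γ k) (hγC : ∀ k, γ k ≤ C) (hlam : ∀ k, 0 ≤ lam k)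
    (ha : Summable fun k => lam k * ‖a k‖) (hb : Summable fun k => lam k * ‖b k‖) :
    Summable fun k => lam k * (‖a k‖ + γ k * ‖b k‖) := by
  refine .of_nonneg_of_le (fun k => ?_) (fun k => ?_) (ha.add (hb.mul_left C))
  · have := hγ k
    have := hlam k
    positivity
  · calc lam k * (‖a k‖ + γ k * ‖b k‖) = lam k * ‖a k‖ + γ k * (lam k * ‖b k‖) := by ring
      _ ≤ lam k * ‖a k‖ + C * (lam k * ‖b k‖) := by
        have := hlam k
        gcongr
        exact hγC k

lemma tendsto_zero_of_const_mul_sq_norm {ι : Type*} {F : Filter ι} {v : ι → E} {c : ℝ}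
    (hc : c ≠ 0) (hv : Tendsto (fun i => c * ‖v i‖ ^ 2) F (𝓝 0)) : Tendsto v F (𝓝 0) := by
  rw [tendsto_zero_iff_norm_tendsto_zero]
  simpa [hc] using (hv.const_mul c⁻¹).sqrt

end NormedGroups

/-- The solution set `Ω` of the inclusion `0 ∈ A z + B z`. -/
def zerosOfSum {G : Type*} [AddGroup G] (A : G → Set G) (B : G → G) : Set G :=
  {z | ∃ u ∈ A z, u + B z = 0}

lemma mem_zerosOfSum_iff {G : Type*} [AddGroup G] {A : G → Set G} {B : G → G} {z : G} :
    z ∈ zerosOfSum A B ↔ -B z ∈ A z := by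
  simp [zerosOfSum, add_eq_zero_iff_eq_neg]

section InnerProductSpaces

variable {H : Type*} [NormedAddCommGroup H] [InnerProductSpace ℝ H]

section WeakConvergence

variable {ι : Type*} {F : Filter ι} {x y : ι → H} {p q : H}

/-- Weak convergence in a real inner product space of a family `x` along a filter `F`, tested
against the functionals `⟪·, y⟫`; on a Hilbert space these are all the continuous functionals. -/
def WeaklyTendsto (x : ι → H) (F : Filter ι) (p : H) : Prop :=
  ∀ y : H, Tendsto (fun i => ⟪x i, y⟫) F (𝓝 ⟪p, y⟫)

lemma tendsto_inner_zero_of_isBigO_one (hx : x =O[F] fun _ => (1 : ℝ)) (hy : Tendsto y F (𝓝 0)) :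
    Tendsto (fun i => ⟪x i, y i⟫) F (𝓝 0) :=
  hy.op_zero_isBoundedUnder_le ((Asymptotics.isBigO_one_iff ℝ).1 hx) (fun v u => ⟪u, v⟫)
    fun v u => (norm_inner_le_norm u v).trans_eq (mul_comm _ _)

lemma WeaklyTendsto.inner (hxp : WeaklyTendsto x F p) (hx : x =O[F] fun _ => (1 : ℝ))
    (hy : Tendsto y F (𝓝 q)) : Tendsto (fun i => ⟪x i, y i⟫) F (𝓝 ⟪p, q⟫) := by
  have := (hxp q).add (tendsto_inner_zero_of_isBigO_one hx (tendsto_sub_nhds_zero_iff.2 hy))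
  simpa [← inner_add_right] using this

lemma WeaklyTendsto.sub (hxp : WeaklyTendsto x F p) (hyq : WeaklyTendsto y F q) :
    WeaklyTendsto (fun i => x i - y i) F (p - q) := fun w => by
  simpa only [inner_sub_left] using (hxp w).sub (hyq w)

lemma weaklyTendsto_of_tendsto (hx : Tendsto x F (𝓝 p)) : WeaklyTendsto x F p := fun _ =>
  hx.inner tendsto_const_nhds

lemma exists_weaklyTendsto_ultrafilter [CompleteSpace H] (U : Ultrafilter ι)
    (hx : x =O[U] fun _ => (1 : ℝ)) : ∃ p, WeaklyTendsto x U p := by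
  obtain ⟨M, hM⟩ := (Asymptotics.isBigO_one_iff ℝ).1 hx
  let f : ι → WeakDual ℝ H := fun i => StrongDual.toWeakDual (InnerProductSpace.toDual ℝ H (x i))
  have mem_ball : ∀ᶠ i in U, f i ∈ WeakDual.toStrongDual ⁻¹' Metric.closedBall 0 M := by
    filter_upwards [eventually_map.1 hM] with i hi
    simpa [f] using hi
  obtain ⟨φ, -, hφ⟩ := (WeakDual.isCompact_closedBall (𝕜 := ℝ) (E := H) 0 M).ultrafilter_le_nhds
    (U.map f) (le_principal_iff.2 mem_ball)
  refine ⟨(InnerProductSpace.toDual ℝ H).symm (WeakDual.toStrongDual φ), fun y => ?_⟩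
  rw [InnerProductSpace.toDual_symm_apply]
  exact ((WeakDual.eval_continuous y).tendsto φ).comp hφ

lemma exists_tendsto_inner_sub_of_tendsto_norm_sub {l m : ℝ}
    (hp : Tendsto (fun i => ‖x i - p‖) F (𝓝 l)) (hq : Tendsto (fun i => ‖x i - q‖) F (𝓝 m)) :
    ∃ c, Tendsto (fun i => ⟪x i, p - q⟫) F (𝓝 c) := by
  refine ⟨_, ((((hq.pow 2).sub (hp.pow 2)).sub_const (‖q‖ ^ 2 - ‖p‖ ^ 2)).div_const 2).congr
    fun i => ?_⟩
  rw [norm_sub_sq_real, norm_sub_sq_real, inner_sub_right]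
  ring

lemma WeaklyTendsto.eq_of_tendsto_inner_sub {G₁ G₂ : Filter ι} [G₁.NeBot] [G₂.NeBot] {c : ℝ}
    (hp : WeaklyTendsto x G₁ p) (hq : WeaklyTendsto x G₂ q) (h₁ : G₁ ≤ F) (h₂ : G₂ ≤ F)
    (hc : Tendsto (fun i => ⟪x i, p - q⟫) F (𝓝 c)) : p = q := by
  have hpc := tendsto_nhds_unique (hp (p - q)) (hc.mono_left h₁)
  have hqc := tendsto_nhds_unique (hq (p - q)) (hc.mono_left h₂)
  rw [← sub_eq_zero, ← inner_self_eq_zero (𝕜 := ℝ), inner_sub_left, hpc, hqc, sub_self]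

/-- **Opial's lemma**, with weak cluster points encoded as weak limits along ultrafilters finer
than `F`. -/
theorem exists_weaklyTendsto_of_forall_tendsto_norm_sub [CompleteSpace H] [F.NeBot] {S : Set H}
    (hx : x =O[F] fun _ => (1 : ℝ))
    (hS : ∀ z ∈ S, ∃ l, Tendsto (fun i => ‖x i - z‖) F (𝓝 l))
    (hcluster : ∀ U : Ultrafilter ι, ↑U ≤ F → ∀ p, WeaklyTendsto x U p → p ∈ S) :
    ∃ p ∈ S, WeaklyTendsto x F p := by
  have exists_limit : ∀ U : Ultrafilter ι, ↑U ≤ F → ∃ p, WeaklyTendsto x U p := fun U hU =>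
    exists_weaklyTendsto_ultrafilter U (hx.mono hU)
  have hU₀ := Ultrafilter.of_le F
  obtain ⟨p, hp⟩ := exists_limit _ hU₀
  have hpS := hcluster _ hU₀ p hp
  refine ⟨p, hpS, fun y => tendsto_iff_ultrafilter _ _ _ |>.2 fun V hV => ?_⟩
  obtain ⟨q, hq⟩ := exists_limit V hV
  obtain ⟨l, hl⟩ := hS p hpS
  obtain ⟨m, hm⟩ := hS q (hcluster V hV q hq)
  obtain ⟨c, hc⟩ := exists_tendsto_inner_sub_of_tendsto_norm_sub hl hm
  rw [hp.eq_of_tendsto_inner_sub hq hU₀ hV hc]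
  exact hq y

end WeakConvergence

section Operators

/-- Monotonicity of a set-valued operator on a real inner product space. -/
def IsMonotoneOperator (A : H → Set H) : Prop :=
  ∀ x y u v : H, u ∈ A x → v ∈ A y → 0 ≤ ⟪x - y, u - v⟫

/-- Maximal monotonicity of a set-valued operator: every pair monotonically related to the whole
graph of `A` belongs to that graph. -/
structure IsMaximalMonotone (A : H → Set H) : Prop where
  monotone : IsMonotoneOperator A
  maximal : ∀ z w : H, (∀ x : H, ∀ u ∈ A x, 0 ≤ ⟪x - z, u - w⟫) → w ∈ A z

/-- `β`-cocoercivity of a single-valued operator, also called `β`-inverse strong monotonicity. -/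
def IsCocoercive (β : ℝ) (B : H → H) : Prop :=
  ∀ x y : H, β * ‖B x - B y‖ ^ 2 ≤ ⟪x - y, B x - B y⟫

/-- `J` is a resolvent `(id + γ A)⁻¹`, expressed by the inclusion characterizing its values. -/
def IsResolvent (γ : ℝ) (A : H → Set H) (J : H → H) : Prop :=
  ∀ y : H, (1 / γ) • (y - J y) ∈ A (J y)

/-- The forward-backward map with step size `γ`: an explicit step along `B` followed by the
resolvent `J`. -/
def forwardBackward (J : H → H) (γ : ℝ) (B : H → H) (x : H) : H :=
  J (x - γ • B x)

variable {A : H → Set H} {B : H → H} {J : H → H} {β γ : ℝ} {z : H}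

lemma IsCocoercive.mul_norm_sub_le (hB : IsCocoercive β B) (x y : H) :
    β * ‖B x - B y‖ ≤ ‖x - y‖ := by
  rcases (norm_nonneg (B x - B y)).eq_or_lt with h | h
  · simp [← h]
  · refine le_of_mul_le_mul_right ?_ h
    calc β * ‖B x - B y‖ * ‖B x - B y‖ = β * ‖B x - B y‖ ^ 2 := by ring
      _ ≤ ⟪x - y, B x - B y⟫ := hB x y
      _ ≤ ‖x - y‖ * ‖B x - B y‖ := real_inner_le_norm _ _

lemma IsResolvent.norm_sub_le (hA : IsMonotoneOperator A) (hγ : 0 < γ) (hJ : IsResolvent γ A J)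
    (x y : H) : ‖J x - J y‖ ≤ ‖x - y‖ := by
  have firm : ‖J x - J y‖ ^ 2 ≤ ⟪J x - J y, x - y⟫ := by
    have h := hA _ _ _ _ (hJ x) (hJ y)
    rw [← smul_sub, real_inner_smul_right, sub_sub_sub_comm, inner_sub_right,
      real_inner_self_eq_norm_sq] at h
    exact sub_nonneg.1 (nonneg_of_mul_nonneg_right h (by positivity))
  rcases (norm_nonneg (J x - J y)).eq_or_lt with h | h
  · simp [← h]
  · refine le_of_mul_le_mul_left ?_ h
    rw [← sq]
    exact firm.trans (real_inner_le_norm _ _)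

section Demiclosedness

variable {ι : Type*} {F : Filter ι} {x q u : ι → H} {p w : H}

lemma IsMaximalMonotone.mem_of_weaklyTendsto [F.NeBot] (hA : IsMaximalMonotone A)
    (hq : q =O[F] fun _ => (1 : ℝ)) (hqp : WeaklyTendsto q F p) (huw : Tendsto u F (𝓝 w))
    (hu : ∀ i, u i ∈ A (q i)) : w ∈ A p := by
  refine hA.maximal p w fun y v hv => ?_
  have hvu : Tendsto (fun i => v - u i) F (𝓝 (v - w)) := tendsto_const_nhds.sub huw
  have hlim : Tendsto (fun i => ⟪y - q i, v - u i⟫) F (𝓝 ⟪y - p, v - w⟫) := by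
    simpa only [inner_sub_left] using
      (tendsto_const_nhds.inner hvu).sub (hqp.inner hq hvu)
  exact ge_of_tendsto' hlim fun i => hA.monotone _ _ _ _ hv (hu i)

lemma IsCocoercive.eq_of_weaklyTendsto [F.NeBot] (hβ : 0 < β) (hB : IsCocoercive β B)
    (hx : x =O[F] fun _ => (1 : ℝ)) (hxp : WeaklyTendsto x F p)
    (hBx : Tendsto (fun i => B (x i)) F (𝓝 w)) : B p = w := by
  have hd : Tendsto (fun i => B (x i) - B p) F (𝓝 (w - B p)) := hBx.sub_const _
  have hinner : Tendsto (fun i => ⟪x i - p, B (x i) - B p⟫) F (𝓝 0) := by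
    simpa only [inner_sub_left, sub_self] using
      (hxp.inner hx hd).sub ((tendsto_const_nhds (x := p)).inner hd)
  have hle : β * ‖w - B p‖ ^ 2 ≤ 0 :=
    le_of_tendsto_of_tendsto' ((hd.norm.pow 2).const_mul β) hinner fun i => hB (x i) p
  have hzero : ‖w - B p‖ ^ 2 = 0 :=
    le_antisymm (nonpos_of_mul_nonpos_right hle hβ) (sq_nonneg _)
  exact (sub_eq_zero.1 (norm_eq_zero.1 (pow_eq_zero_iff two_ne_zero |>.1 hzero))).symm

lemma IsCocoercive.isBigO_one_sub (hβ : 0 < β) (hB : IsCocoercive β B)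
    (hx : x =O[F] fun _ => (1 : ℝ)) (z : H) :
    (fun i => B (x i) - B z) =O[F] fun _ => (1 : ℝ) := by
  have hlip : (fun i => B (x i) - B z) =O[F] fun i => x i - z :=
    .of_bound β⁻¹ <| .of_forall fun i => (le_inv_mul_iff₀ hβ).2 (hB.mul_norm_sub_le _ _)
  exact hlip.trans (hx.sub (Asymptotics.isBigO_const_const z one_ne_zero F))

lemma IsCocoercive.mul_sq_norm_sub_le_of_mem (hA : IsMonotoneOperator A) (hB : IsCocoercive β B)
    (hz : z ∈ zerosOfSum A B) {x q u : H} (hu : u ∈ A q) :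
    β * ‖B x - B z‖ ^ 2 ≤ ⟪q - z, u + B x⟫ + ⟪B x - B z, x - q⟫ := by
  have hmono := hA _ _ _ _ hu (mem_zerosOfSum_iff.1 hz)
  calc β * ‖B x - B z‖ ^ 2 ≤ ⟪x - z, B x - B z⟫ := hB x z
    _ ≤ ⟪x - z, B x - B z⟫ + ⟪q - z, u - -B z⟫ := le_add_of_nonneg_right hmono
    _ = ⟪q - z, u + B x⟫ + ⟪B x - B z, x - q⟫ := by
      rw [real_inner_comm (x - q)]
      simp only [inner_sub_left, inner_sub_right, inner_add_right, inner_neg_right]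
      ring

lemma IsCocoercive.tendsto_of_approximate_zeros (hβ : 0 < β) (hA : IsMonotoneOperator A)
    (hB : IsCocoercive β B) (hz : z ∈ zerosOfSum A B) (hx : x =O[F] fun _ => (1 : ℝ))
    (hu : ∀ i, u i ∈ A (q i)) (hxq : Tendsto (fun i => x i - q i) F (𝓝 0))
    (hux : Tendsto (fun i => u i + B (x i)) F (𝓝 0)) :
    Tendsto (fun i => B (x i)) F (𝓝 (B z)) := by
  have hqz : (fun i => q i - z) =O[F] fun _ => (1 : ℝ) := by
    have := (hx.sub (hxq.isBigO_one ℝ)).sub (Asymptotics.isBigO_const_const z one_ne_zero F)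
    simpa only [sub_sub_cancel] using this
  have hbound : Tendsto (fun i => ⟪q i - z, u i + B (x i)⟫ + ⟪B (x i) - B z, x i - q i⟫)
      F (𝓝 0) := by
    simpa using (tendsto_inner_zero_of_isBigO_one hqz hux).add
      (tendsto_inner_zero_of_isBigO_one (hB.isBigO_one_sub hβ hx z) hxq)
  have hsq : Tendsto (fun i => β * ‖B (x i) - B z‖ ^ 2) F (𝓝 0) :=
    squeeze_zero (fun i => by positivity) (fun i => hB.mul_sq_norm_sub_le_of_mem hA hz (hu i))
      hbound
  exact tendsto_sub_nhds_zero_iff.1 (tendsto_zero_of_const_mul_sq_norm hβ.ne' hsq)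

theorem mem_zerosOfSum_of_weaklyTendsto [F.NeBot] (hβ : 0 < β) (hA : IsMaximalMonotone A)
    (hB : IsCocoercive β B) (hΩ : (zerosOfSum A B).Nonempty) (hx : x =O[F] fun _ => (1 : ℝ))
    (hu : ∀ i, u i ∈ A (q i)) (hxq : Tendsto (fun i => x i - q i) F (𝓝 0))
    (hux : Tendsto (fun i => u i + B (x i)) F (𝓝 0)) (hxp : WeaklyTendsto x F p) :
    p ∈ zerosOfSum A B := by
  obtain ⟨z, hz⟩ := hΩ
  have hBx := hB.tendsto_of_approximate_zeros hβ hA.monotone hz hx hu hxq hux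
  have hBp : B p = B z := hB.eq_of_weaklyTendsto hβ hx hxp hBx
  have hulim : Tendsto u F (𝓝 (-B p)) := by
    simpa [hBp] using hux.sub hBx
  have hqbdd : q =O[F] fun _ => (1 : ℝ) := by
    simpa only [sub_sub_cancel] using hx.sub (hxq.isBigO_one ℝ)
  have hqp : WeaklyTendsto q F p := by
    simpa only [sub_sub_cancel, sub_zero] using hxp.sub (weaklyTendsto_of_tendsto hxq)
  exact mem_zerosOfSum_iff.2 (hA.mem_of_weaklyTendsto hqbdd hqp hulim hu)

end Demiclosedness

section ForwardBackwardStep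

lemma IsResolvent.residual_sub_mem (hγ : γ ≠ 0) (hJ : IsResolvent γ A J) (B : H → H) (x : H) :
    (1 / γ) • (x - forwardBackward J γ B x) - B x ∈ A (forwardBackward J γ B x) := by
  have heq : (1 / γ) • (x - forwardBackward J γ B x) - B x =
      (1 / γ) • (x - γ • B x - forwardBackward J γ B x) := by
    simp only [smul_sub, smul_smul, one_div_mul_cancel hγ, one_smul]
    abel
  rw [heq]
  exact hJ (x - γ • B x)

lemma mul_sq_norm_residual_le_inner (hβ : 0 < β) (hγ : 0 < γ) (hA : IsMonotoneOperator A)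
    (hB : IsCocoercive β B) (hJ : IsResolvent γ A J) (hz : z ∈ zerosOfSum A B) (x : H) :
    (4 * β - γ) / (2 * β) * ‖x - forwardBackward J γ B x‖ ^ 2 ≤
      2 * ⟪x - z, x - forwardBackward J γ B x⟫ := by
  have hmono := hB.mul_sq_norm_sub_le_of_mem hA hz (x := x) (hJ.residual_sub_mem hγ.ne' B x)
  set r := x - forwardBackward J γ B x with hr
  have hsub : forwardBackward J γ B x - z = (x - z) - r := by rw [hr]; abel
  rw [hsub, sub_add_cancel, real_inner_smul_right, inner_sub_left,
    real_inner_self_eq_norm_sq] at hmono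
  -- Completing the square absorbs the cross term `⟪B x - B z, r⟫`.
  have hsquare : 0 ≤ 4 * β ^ 2 * ‖B x - B z‖ ^ 2 - 4 * β * ⟪B x - B z, r⟫ + ‖r‖ ^ 2 := by
    have h := sq_nonneg ‖(2 * β) • (B x - B z) - r‖
    rw [norm_sub_sq_real, real_inner_smul_left, norm_smul, mul_pow, Real.norm_eq_abs, sq_abs] at h
    linarith
  field_simp at hmono ⊢
  nlinarith

lemma sq_norm_relaxed_step_sub_add_le (hβ : 0 < β) (hγ : 0 < γ) (hA : IsMonotoneOperator A)
    (hB : IsCocoercive β B) (hJ : IsResolvent γ A J) (hz : z ∈ zerosOfSum A B) {lam : ℝ}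
    (hlam : 0 ≤ lam) (x : H) :
    ‖x - lam • (x - forwardBackward J γ B x) - z‖ ^ 2 +
      lam * ((4 * β - γ) / (2 * β) - lam) * ‖x - forwardBackward J γ B x‖ ^ 2 ≤ ‖x - z‖ ^ 2 := by
  have h := mul_le_mul_of_nonneg_left (mul_sq_norm_residual_le_inner hβ hγ hA hB hJ hz x) hlam
  rw [sub_right_comm, norm_sub_sq_real, real_inner_smul_right, norm_smul, mul_pow,
    Real.norm_eq_abs, sq_abs]
  linarith

lemma norm_inexact_step_sub_le (hγ : 0 < γ) (hA : IsMonotoneOperator A) (hJ : IsResolvent γ A J)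
    {lam : ℝ} (hlam : 0 ≤ lam) (x a b z : H) :
    ‖x + lam • (J (x - γ • (B x + b)) + a - x) - z‖ ≤
      ‖x - lam • (x - forwardBackward J γ B x) - z‖ + lam * (‖a‖ + γ * ‖b‖) := by
  have hJb : ‖J (x - γ • (B x + b)) - forwardBackward J γ B x‖ ≤ γ * ‖b‖ := by
    refine (hJ.norm_sub_le hA hγ _ _).trans_eq ?_
    rw [sub_sub_sub_cancel_left, ← smul_sub, sub_add_cancel_left, norm_smul, norm_neg,
      Real.norm_of_nonneg hγ.le]
  have hsplit : x + lam • (J (x - γ • (B x + b)) + a - x) - z =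
      (x - lam • (x - forwardBackward J γ B x) - z) +
        lam • (a + (J (x - γ • (B x + b)) - forwardBackward J γ B x)) := by
    module
  rw [hsplit]
  refine norm_add_le_of_le le_rfl ?_
  rw [norm_smul, Real.norm_of_nonneg hlam]
  gcongr
  exact norm_add_le_of_le le_rfl hJb

end ForwardBackwardStep

end Operators

section ForwardBackwardIteration

variable {A : H → Set H} {B : H → H} {J : ℕ → H → H} {β lamlb τ γlb : ℝ} {γ lam : ℕ → ℝ}
  {a b x : ℕ → H} {z : H}

theorem exists_tendsto_norm_sub_and_residual_tendsto_zero (hβ : 0 < β)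
    (hA : IsMonotoneOperator A) (hB : IsCocoercive β B) (hz : z ∈ zerosOfSum A B)
    (hγ : ∀ k, 0 < γ k) (hlamlb : 0 < lamlb) (hτ : 0 < τ)
    (hlam : ∀ k, lamlb ≤ lam k ∧ lam k ≤ (4 * β - γ k) / (2 * β) - τ)
    (ha : Summable fun k => lam k * ‖a k‖) (hb : Summable fun k => lam k * ‖b k‖)
    (hJ : ∀ k, IsResolvent (γ k) A (J k))
    (hx : ∀ k, x (k + 1) =
      x k + lam k • (J k (x k - γ k • (B (x k) + b k)) + a k - x k)) :
    (∃ l, Tendsto (fun k => ‖x k - z‖) atTop (𝓝 l)) ∧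
      Tendsto (fun k => x k - forwardBackward (J k) (γ k) B (x k)) atTop (𝓝 0) := by
  have hlam0 : ∀ k, 0 ≤ lam k := fun k => hlamlb.le.trans (hlam k).1
  have hγβ : ∀ k, γ k ≤ 4 * β := fun k => by
    have hpos : 0 < (4 * β - γ k) / (2 * β) := by linarith [hlam k]
    linarith [(div_pos_iff_of_pos_right (by positivity : 0 < 2 * β)).1 hpos]
  have hdecrease : ∀ k, ‖x k - lam k • (x k - forwardBackward (J k) (γ k) B (x k)) - z‖ ^ 2 +
      lamlb * τ * ‖x k - forwardBackward (J k) (γ k) B (x k)‖ ^ 2 ≤ ‖x k - z‖ ^ 2 := fun k => by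
    refine le_trans ?_ (sq_norm_relaxed_step_sub_add_le hβ (hγ k) hA hB (hJ k) hz (hlam0 k) (x k))
    have := hlam0 k
    gcongr
    · exact (hlam k).1
    · linarith [hlam k]
  have hperturb := fun k =>
    hx k ▸ norm_inexact_step_sub_le (B := B) (hγ k) hA (hJ k) (hlam0 k) (x k) (a k) (b k) z
  obtain ⟨hconv, hres⟩ := exists_tendsto_and_decrement_tendsto_zero (fun k => norm_nonneg _)
    (fun k => by positivity)
    (summable_mul_norm_add_mul_norm (fun k => (hγ k).le) hγβ hlam0 ha hb) hperturb hdecrease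
  exact ⟨hconv, tendsto_zero_of_const_mul_sq_norm (mul_pos hlamlb hτ).ne' hres⟩

theorem forward_backward_variable_stepsize_weak_convergence_general [CompleteSpace H]
    (hβ : 0 < β) (hA : IsMaximalMonotone A) (hB : IsCocoercive β B)
    (hΩ : (zerosOfSum A B).Nonempty) (hγlb : 0 < γlb) (hlamlb : 0 < lamlb) (hτ : 0 < τ)
    (hγ : ∀ k, γlb ≤ γ k)
    (hlam : ∀ k, lamlb ≤ lam k ∧ lam k ≤ (4 * β - γ k) / (2 * β) - τ)
    (ha : Summable fun k => lam k * ‖a k‖) (hb : Summable fun k => lam k * ‖b k‖)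
    (hJ : ∀ k, IsResolvent (γ k) A (J k))
    (hx : ∀ k, x (k + 1) =
      x k + lam k • (J k (x k - γ k • (B (x k) + b k)) + a k - x k)) :
    ∃ p ∈ zerosOfSum A B, WeaklyTendsto x atTop p := by
  have hγ0 : ∀ k, 0 < γ k := fun k => hγlb.trans_le (hγ k)
  have hfejer := fun z (hz : z ∈ zerosOfSum A B) =>
    exists_tendsto_norm_sub_and_residual_tendsto_zero hβ hA.monotone hB hz hγ0 hlamlb hτ hlam
      ha hb hJ hx
  obtain ⟨z, hz⟩ := hΩ
  obtain ⟨⟨l, hl⟩, hres⟩ := hfejer z hz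
  have hxbdd : x =O[atTop] fun _ => (1 : ℝ) := by
    simpa using (hl.isBigO_one ℝ).of_norm_left.add
      (Asymptotics.isBigO_const_const z one_ne_zero atTop)
  have hscaled : Tendsto
      (fun k => (1 / γ k) • (x k - forwardBackward (J k) (γ k) B (x k))) atTop (𝓝 0) := by
    refine IsBoundedUnder.smul_tendsto_zero (isBoundedUnder_of ⟨1 / γlb, fun k => ?_⟩) hres
    rw [Function.comp_apply, Real.norm_of_nonneg (one_div_nonneg.2 (hγ0 k).le)]
    exact one_div_le_one_div_of_le hγlb (hγ k)
  refine exists_weaklyTendsto_of_forall_tendsto_norm_sub hxbdd (fun z hz => (hfejer z hz).1)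
    fun U hU p hp => ?_
  exact mem_zerosOfSum_of_weaklyTendsto hβ hA hB ⟨z, hz⟩ (hxbdd.mono hU)
    (fun k => (hJ k).residual_sub_mem (hγ0 k).ne' B (x k)) (hres.mono_left hU)
    (by simpa using hscaled.mono_left hU) hp

end ForwardBackwardIteration

end InnerProductSpaces

/-- weak convergence of the forward-backward splitting algorithm with
variable step sizes and extended relaxation parameters (identity metric case). -/
theorem forward_backward_variable_stepsize_weak_convergence
    {H : Type*} [NormedAddCommGroup H] [InnerProductSpace ℝ H] [CompleteSpace H]
    (β : ℝ) (hβ : 0 < β)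
    (A : H → Set H)
    (hAmono : ∀ x y u v : H, u ∈ A x → v ∈ A y → ⟪x - y, u - v⟫ ≥ 0)
    (hAmax : ∀ z w : H, (∀ x : H, ∀ u ∈ A x, ⟪x - z, u - w⟫ ≥ 0) → w ∈ A z)
    (B : H → H)
    (hB : ∀ x y : H, ⟪x - y, B x - B y⟫ ≥ β * ‖B x - B y‖ ^ 2)
    (hΩ : {z : H | ∃ u ∈ A z, u + B z = 0}.Nonempty)
    (γ lam αk : ℕ → ℝ)
    (hγ : ∀ k, 0 < γ k ∧ γ k < 2 * β)
    (hαk : ∀ k, αk k = 2 * β / (4 * β - γ k))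
    (hlam : ∀ k, 0 < lam k ∧ lam k < 1 / αk k)
    (lamlb τ γlb ε : ℝ)
    (hlamlb : 0 < lamlb) (hτ : 0 < τ) (hγlb : 0 < γlb)
    (hε : 0 < ε ∧ ε < 2 * β - γlb)
    (hlam' : ∀ k, lamlb ≤ lam k ∧ lam k ≤ 1 / αk k - τ)
    (hγ' : ∀ k, γlb ≤ γ k ∧ γ k ≤ 2 * β - ε)
    (a b : ℕ → H)
    (ha : Summable (fun k => lam k * ‖a k‖))
    (hb : Summable (fun k => lam k * ‖b k‖))
    (J : ℕ → H → H)
    (hJ : ∀ k, ∀ y : H, (1 / γ k) • (y - J k y) ∈ A (J k y))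
    (x : ℕ → H)
    (hx : ∀ k, x (k + 1) =
      x k + lam k • (J k (x k - γ k • (B (x k) + b k)) + a k - x k)) :
    ∃ p ∈ {z : H | ∃ u ∈ A z, u + B z = 0},
      ∀ y : H, Tendsto (fun k => ⟪x k, y⟫) atTop (nhds ⟪p, y⟫) := by
  simp only [hαk, one_div_div] at hlam'
  exact forward_backward_variable_stepsize_weak_convergence_general hβ ⟨hAmono, hAmax⟩ hB hΩ
    hγlb hlamlb hτ (fun k => (hγ' k).1) hlam' ha hb hJ hx
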